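/- For every cyclic sentence S over the alphabet {A, X, B}, one has |S| = |S̄|, where S̄ denotes the cyclic sentence obtained by reversing the string. -/

import Mathlib

/-!
The "tight puzzle" of Schwartz–Tabachnikov.  Strings over the alphabet `{A, X, B}`;
word list (coefficient, weight): `X (1,0)`, `XA (1,1)`, `XAA (1,1)`, `AXA (2,1)`,
`AAA (-1,1)`, `BA (-1,1)`, `ABA (-1,1)`, `XXA (-1,1)`; in a parsing the word `X` may
never be immediately followed by the word `XA` or the word `BA`.
-/

open scoped Classical

/-- The three-letter alphabet. -/
inductive PLetter | A | X | B
deriving DecidableEq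

/-- Strings over the alphabet. -/
abbrev PWord := List PLetter

/-- The tight puzzle word list. -/
def tightWords : List PWord :=
  [[PLetter.X], [PLetter.X, PLetter.A], [PLetter.X, PLetter.A, PLetter.A],
   [PLetter.A, PLetter.X, PLetter.A], [PLetter.A, PLetter.A, PLetter.A],
   [PLetter.B, PLetter.A], [PLetter.A, PLetter.B, PLetter.A],
   [PLetter.X, PLetter.X, PLetter.A]]

/-- Coefficients of the words of the tight puzzle (`AXA ↦ 2`; `AAA, BA, ABA, XXA ↦ -1`;
`X, XA, XAA ↦ 1`). -/
def tightCoeff (w : PWord) : ℤ :=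
  if w = [PLetter.A, PLetter.X, PLetter.A] then 2
  else if w = [PLetter.A, PLetter.A, PLetter.A] ∨ w = [PLetter.B, PLetter.A] ∨
      w = [PLetter.A, PLetter.B, PLetter.A] ∨ w = [PLetter.X, PLetter.X, PLetter.A] then -1
  else 1

/-- Weights of the words: the word `X` has weight `0`, all other words weight `1`. -/
def wordWt (w : PWord) : ℕ := if w = [PLetter.X] then 0 else 1

/-- The forbidden adjacency: the word `X` immediately followed by `XA` or `BA`. -/
def Bad (u v : PWord) : Prop :=
  u = [PLetter.X] ∧ (v = [PLetter.X, PLetter.A] ∨ v = [PLetter.B, PLetter.A])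

/-- The contribution `coefficient · t^weight ∈ ℤ[t]` of a parsing `L`. -/
noncomputable def parseVal (c : PWord → ℤ) (L : List PWord) : Polynomial ℤ :=
  Polynomial.C ((L.map c).prod) * Polynomial.X ^ ((L.map wordWt).sum)

/-- `L` is a parsing in the tight puzzle: all its words are on the word list and the
forbidden adjacency never occurs. -/
def TightChain (L : List PWord) : Prop :=
  (∀ w ∈ L, w ∈ tightWords) ∧ List.Chain' (fun u v => ¬ Bad u v) L

/-- The *core* of a string: what remains after deleting all leading and trailing `X`s. -/
def core (s : PWord) : PWord :=
  ((s.dropWhile (· == PLetter.X)).reverse.dropWhile (· == PLetter.X)).reverse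

/-- `L` is a parsing of the bi-infinite string `⋯XX·W·XX⋯` (with the infinitely many
padding `X`s parsed as copies of the word `X` and trimmed away): the words of `L`
concatenate to `W` up to padding by `X`s on either side, `L` neither starts nor ends
with the word `X`, and (because of the padding `X`-words on the left) the first word
of `L` is not `XA` or `BA`. -/
def IsOpenParsing (W : PWord) (L : List PWord) : Prop :=
  TightChain L ∧ core L.flatten = core W ∧
  ∀ h : L ≠ [],
    L.head h ≠ [PLetter.X] ∧ L.head h ≠ [PLetter.X, PLetter.A] ∧
    L.head h ≠ [PLetter.B, PLetter.A] ∧ L.getLast h ≠ [PLetter.X]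

/-- `(r, L)` is a parsing of the cyclic string `(W)`: reading the necklace of the
letters of `W` starting at position `r`, the words of `L` concatenate to it, the
forbidden adjacency does not occur (cyclically), and `r < (last word).length`
(so that every parsing of the necklace is counted exactly once). -/
def IsCyclicParsing (W : PWord) (r : ℕ) (L : List PWord) : Prop :=
  TightChain L ∧
  ∃ h : L ≠ [], L.flatten = W.rotate r ∧ r < (L.getLast h).length ∧
    ¬ Bad (L.getLast h) (L.head h)

/-- `L` is a parsing of the locked string `[W]`: the words of `L` concatenate exactly
to `W`, no padding allowed. -/
def IsLockedParsing (W : PWord) (L : List PWord) : Prop :=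
  TightChain L ∧ L.flatten = W

/-- The nine words of both puzzles, as a function (used to enumerate parsings). -/
def wordOf : Fin 9 → PWord :=
  ![[PLetter.X], [PLetter.X, PLetter.A], [PLetter.X, PLetter.A, PLetter.A],
    [PLetter.X, PLetter.B, PLetter.A], [PLetter.A, PLetter.X, PLetter.A],
    [PLetter.A, PLetter.A, PLetter.A], [PLetter.B, PLetter.A],
    [PLetter.A, PLetter.B, PLetter.A], [PLetter.X, PLetter.X, PLetter.A]]

/-- The open value `|W| ∈ ℤ[t]`: the sum of `coefficient · t^weight` over all parsings
of the bi-infinite string `⋯XX·W·XX⋯` (any such parsing consists of at most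
`W.length + 2` words). -/
noncomputable def openVal (W : PWord) : Polynomial ℤ :=
  ∑ k ∈ Finset.range (W.length + 3), ∑ f : Fin k → Fin 9,
    if IsOpenParsing W ((List.ofFn f).map wordOf) then
      parseVal tightCoeff ((List.ofFn f).map wordOf)
    else 0

/-- The cyclic value `|(W)| ∈ ℤ[t]`: the sum of `coefficient · t^weight` over all
parsings of the cyclic string `(W)`. -/
noncomputable def cycVal (W : PWord) : Polynomial ℤ :=
  ∑ r ∈ Finset.range W.length, ∑ k ∈ Finset.range (W.length + 1), ∑ f : Fin k → Fin 9,
    if IsCyclicParsing W r ((List.ofFn f).map wordOf) then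
      parseVal tightCoeff ((List.ofFn f).map wordOf)
    else 0

/-- The locked value `|[W]| ∈ ℤ[t]`: the sum of `coefficient · t^weight` over all
parsings whose concatenation is exactly `W`. -/
noncomputable def lockVal (W : PWord) : Polynomial ℤ :=
  ∑ k ∈ Finset.range (W.length + 1), ∑ f : Fin k → Fin 9,
    if IsLockedParsing W ((List.ofFn f).map wordOf) then
      parseVal tightCoeff ((List.ofFn f).map wordOf)
    else 0

/-- The original puzzle word list (the tight list together with `XBA`). -/
def origWords : List PWord :=
  tightWords ++ [[PLetter.X, PLetter.B, PLetter.A]]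

/-- Coefficients of the words of the original puzzle (`AXA ↦ 2`; `XXA ↦ -2`;
`AAA, BA, ABA ↦ -1`; `X, XA, XAA, XBA ↦ 1`). -/
def origCoeff (w : PWord) : ℤ :=
  if w = [PLetter.A, PLetter.X, PLetter.A] then 2
  else if w = [PLetter.X, PLetter.X, PLetter.A] then -2
  else if w = [PLetter.A, PLetter.A, PLetter.A] ∨ w = [PLetter.B, PLetter.A] ∨
      w = [PLetter.A, PLetter.B, PLetter.A] then -1
  else 1

/-- `(r, L)` is a parsing of the cyclic string `(W)` in the original puzzle (all
parsings allowed, no adjacency restriction): reading the necklace of the letters of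
`W` starting at position `r`, the words of `L` concatenate to it, and
`r < (last word).length` (so that every parsing of the necklace is counted exactly
once). -/
def IsOrigCyclicParsing (W : PWord) (r : ℕ) (L : List PWord) : Prop :=
  (∀ w ∈ L, w ∈ origWords) ∧
  ∃ h : L ≠ [], L.flatten = W.rotate r ∧ r < (L.getLast h).length

/-- The cyclic value `|(W)| ∈ ℤ[t]` in the original puzzle. -/
noncomputable def origCycVal (W : PWord) : Polynomial ℤ :=
  ∑ r ∈ Finset.range W.length, ∑ k ∈ Finset.range (W.length + 1), ∑ f : Fin k → Fin 9,
    if IsOrigCyclicParsing W r ((List.ofFn f).map wordOf) then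
      parseVal origCoeff ((List.ofFn f).map wordOf)
    else 0

/-!
Read a cyclic text `W` letter by letter, remembering which part of the current word is still
unread. Every letter then acts by a transfer matrix over `ℤ[t]` indexed by the proper suffixes of
the words, and `|W|` is the trace of the product of these matrices along `W`.

In the original puzzle `XAA`, `XBA`, `XXA` have coefficients `1, 1, -2` and `AAA`, `ABA`, `AXA`
have coefficients `-1, -1, 2`, so that the remainders `AA`, `BA`, `XA` only ever arise in the
combination `1 : 1 : -2`. Hence the five-dimensional transfer matrices factor through a common
three-dimensional space. There all letters act self-adjointly for one nondegenerate symmetric form,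
and taking adjoints reverses a product of matrices without changing its trace.
-/

section Lists

/-- The lists over `ι` of length less than `n`. -/
def listsLT (ι : Type*) [Fintype ι] (n : ℕ) : Finset (List ι) :=
  ((Finset.range n).sigma fun _ => Finset.univ).map List.equivSigmaTuple.symm.toEmbedding

variable {ι M : Type*} [Fintype ι] [AddCommMonoid M]

lemma sum_listsLT (n : ℕ) (φ : List ι → M) :
    ∑ L ∈ listsLT ι n, φ L = ∑ k ∈ Finset.range n, ∑ f : Fin k → ι, φ (List.ofFn f) := by
  rw [listsLT, Finset.sum_map, Finset.sum_sigma]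
  rfl

lemma sum_listsLT_succ (n : ℕ) (φ : List ι → M) :
    ∑ L ∈ listsLT ι (n + 1), φ L = φ [] + ∑ i, ∑ L ∈ listsLT ι n, φ (i :: L) := by
  simp only [sum_listsLT]
  rw [Finset.sum_range_succ', Finset.sum_comm, add_comm]
  congr 1
  · simp
  · refine Finset.sum_congr rfl fun k _ => ?_
    rw [← (Fin.consEquiv fun _ : Fin (k + 1) => ι).sum_comp, Fintype.sum_prod_type]
    simp [Fin.consEquiv, List.ofFn_succ]

end Lists

section Reading

variable {α ι n : Type*}

/-- `Reads word s W s' L` says that the text `W` can be read by finishing a word of which `s` is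
still unread and then reading the words `L`, the last of which sticks out of `W` by `s'`.
The bound on `s'` says that every word of `L` is begun inside `W`. -/
def Reads (word : ι → List α) (s W s' : List α) (L : List ι) : Prop :=
  s ++ L.flatMap word = W ++ s' ∧ ∀ i ∈ L.getLast?, s'.length < (word i).length

/-- `ReadsCyclically word W r L` says that the words `L` spell the cyclic text `W` from position
`r` on and that the last of them covers the last letter of `W`, so that its final `r` letters are
the first `r` letters of `W`. -/
def ReadsCyclically (word : ι → List α) (W : List α) (r : ℕ) (L : List ι) : Prop :=
  L.flatMap word = W.rotate r ∧ ∃ i ∈ L.getLast?, r < (word i).length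

/-- The labels `σ` of the states are distinct and include every remainder that can occur
when the nonempty words `word` are read letter by letter. -/
structure IsRemainderSystem (word : ι → List α) (σ : n → List α) : Prop where
  word_ne_nil (i : ι) : word i ≠ []
  injective : Function.Injective σ
  exists_eq_tail_word (i : ι) : ∃ q, σ q = (word i).tail
  exists_eq_tail (q : n) : ∃ q', σ q' = (σ q).tail

variable {word : ι → List α} {s s' W : List α} {i : ι} {L : List ι}

lemma reads_nil_right_iff : Reads word s [] s' L ↔ L = [] ∧ s = s' := by
  rcases L.eq_nil_or_concat' with rfl | ⟨L, i, rfl⟩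
  · simp [Reads]
  · suffices s ++ (L.flatMap word ++ word i) = s' → (word i).length ≤ s'.length by
      simpa [Reads]
    rintro rfl
    simp only [List.length_append]
    omega

lemma reads_cons_cons_iff {a b : α} :
    Reads word (b :: s) (a :: W) s' L ↔ b = a ∧ Reads word s W s' L := by
  simp [Reads, and_assoc]

lemma reads_nil_cons_iff (hW : W ≠ []) :
    Reads word [] W s' (i :: L) ↔ Reads word (word i) W s' L := by
  rcases L.eq_nil_or_concat' with rfl | ⟨L, j, rfl⟩
  · suffices word i = W ++ s' → s'.length < (word i).length by simpa [Reads]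
    intro h
    simp [h, List.length_pos_iff.mpr hW]
  · simp [Reads, List.getLast?_cons]

lemma suffix_flatMap_of_mem_getLast? (hi : i ∈ L.getLast?) : word i <:+ L.flatMap word := by
  rw [Option.mem_def, List.getLast?_eq_some_iff] at hi
  obtain ⟨L, rfl⟩ := hi
  simp

lemma ReadsCyclically.lt_length {r : ℕ} (h : ReadsCyclically word W r L) : r < W.length := by
  obtain ⟨hL, i, hi, hr⟩ := h
  have := (suffix_flatMap_of_mem_getLast? (word := word) hi).length_le
  rw [hL, List.length_rotate] at this
  exact hr.trans_le this

lemma ReadsCyclically.reads {r : ℕ} (h : ReadsCyclically word W r L) :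
    Reads word (W.take r) W (W.take r) L := by
  have hr := h.lt_length
  obtain ⟨hL, i, hi, hri⟩ := h
  refine ⟨?_, fun j hj => ?_⟩
  · rw [hL, List.rotate_eq_drop_append_take hr.le, ← List.append_assoc, List.take_append_drop]
  · rw [Option.mem_unique hj hi]
    exact (List.length_take_le r W).trans_lt hri

lemma Reads.readsCyclically (hW : W ≠ []) (h : Reads word s W s L) :
    ReadsCyclically word W s.length L ∧ s = W.take s.length := by
  obtain ⟨hL, hlast⟩ := h
  obtain ⟨i, hi⟩ : ∃ i, i ∈ L.getLast? := by
    rcases L.eq_nil_or_concat' with rfl | ⟨L, i, rfl⟩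
    · simp [hW] at hL
    · simp
  have hs : s.length ≤ W.length := by
    have hlen := congrArg List.length hL
    have := (suffix_flatMap_of_mem_getLast? (word := word) hi).length_le
    have := hlast i hi
    simp only [List.length_append] at hlen
    omega
  obtain ⟨V, rfl⟩ : s <+: W :=
    List.prefix_of_prefix_length_le ⟨_, hL⟩ (List.prefix_append W s) hs
  refine ⟨⟨?_, i, hi, hlast i hi⟩, by simp⟩
  rw [List.rotate_append_length_eq]
  exact List.append_cancel_left (hL.trans (List.append_assoc _ _ _))

namespace IsRemainderSystem

variable {σ : n → List α}

lemma exists_eq_of_suffix (hσ : IsRemainderSystem word σ) (hs : s <:+ word i)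
    (hlt : s.length < (word i).length) : ∃ q, σ q = s := by
  obtain ⟨p, hp⟩ := hs
  induction p using List.reverseRecOn generalizing s with
  | nil => simp [← hp] at hlt
  | append_singleton p a ih =>
    rw [List.append_assoc, List.singleton_append] at hp
    rcases p.eq_nil_or_concat' with rfl | ⟨p, b, rfl⟩
    · simpa [← hp] using hσ.exists_eq_tail_word i
    · obtain ⟨q, hq⟩ := ih (by simp only [← hp, List.length_append, List.length_cons]; omega) hp
      simpa [hq] using hσ.exists_eq_tail q

lemma exists_eq_take (hσ : IsRemainderSystem word σ) {r : ℕ} (h : ReadsCyclically word W r L) :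
    ∃ q, σ q = W.take r := by
  have hr := h.lt_length
  obtain ⟨hL, i, hi, hri⟩ := h
  have hlen : (W.take r).length = r := by simp [hr.le]
  refine hσ.exists_eq_of_suffix (i := i) ?_ (by rwa [hlen])
  refine List.suffix_of_suffix_length_le ?_ (suffix_flatMap_of_mem_getLast? hi) (by omega)
  rw [hL, List.rotate_eq_drop_append_take hr.le]
  exact List.suffix_append _ _

lemma sum_reads_eq_sum_readsCyclically {M : Type*} [Fintype n] [AddCommMonoid M]
    (hσ : IsRemainderSystem word σ) (hW : W ≠ []) (L : List ι) (c : M) :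
    ∑ q with Reads word (σ q) W (σ q) L, c =
      ∑ r ∈ Finset.range W.length with ReadsCyclically word W r L, c := by
  refine Finset.sum_nbij (fun q => (σ q).length) ?_ ?_ ?_ fun _ _ => rfl
  · intro q hq
    have := ((Finset.mem_filter.mp hq).2.readsCyclically hW).1
    simpa [this] using this.lt_length
  · intro q hq q' hq' (hlen : (σ q).length = (σ q').length)
    have htake := ((Finset.mem_filter.mp hq).2.readsCyclically hW).2
    have htake' := ((Finset.mem_filter.mp hq').2.readsCyclically hW).2
    exact hσ.injective (by rw [htake, htake', hlen])
  · intro r hr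
    have hread := (Finset.mem_filter.mp hr).2
    obtain ⟨q, hq⟩ := hσ.exists_eq_take hread
    exact ⟨q, by simpa [hq] using hread.reads, by simp [hq, hread.lt_length.le]⟩

end IsRemainderSystem

end Reading

section TransferMatrix

variable {α ι n R : Type*} [Fintype ι] [Semiring R]

/-- The total weight of the lists of fewer than `N` words that read `W` from the remainder `s` to
the remainder `s'`. -/
noncomputable def readVal (word : ι → List α) (wt : ι → R) (N : ℕ) (s W s' : List α) : R :=
  ∑ L ∈ listsLT ι N with Reads word s W s' L, (L.map wt).prod

variable {word : ι → List α} {wt : ι → R} {σ : n → List α} {W s' : List α}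

lemma readVal_nil_left (N : ℕ) (hW : W ≠ []) :
    readVal word wt (N + 1) [] W s' = ∑ i, wt i * readVal word wt N (word i) W s' := by
  have hnil : ¬ Reads word [] W s' [] := by simp [Reads, hW]
  simp [readVal, Finset.sum_filter, sum_listsLT_succ, hnil, reads_nil_cons_iff hW,
    Finset.mul_sum]

variable [DecidableEq α] {s : List α}

lemma readVal_nil_right {N : ℕ} (hN : 0 < N) :
    readVal word wt N s [] s' = if s = s' then 1 else 0 := by
  obtain ⟨N, rfl⟩ := Nat.exists_eq_add_one.mpr hN
  simp [readVal, Finset.sum_filter, sum_listsLT_succ, reads_nil_right_iff]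

lemma readVal_cons_cons (N : ℕ) (a b : α) :
    readVal word wt N (b :: s) (a :: W) s' = if b = a then readVal word wt N s W s' else 0 := by
  simp only [readVal, reads_cons_cons_iff]
  split_ifs with h <;> simp [h]

variable [Fintype n]

lemma readVal_cons_eq_sum (hinj : Function.Injective σ) (N : ℕ) (a : α)
    (hs : s ≠ []) (htail : ∃ q, σ q = s.tail) :
    readVal word wt N s (a :: W) s' =
      ∑ q, if s = a :: σ q then readVal word wt N (σ q) W s' else 0 := by
  obtain ⟨b, t, rfl⟩ := List.exists_cons_of_ne_nil hs
  obtain ⟨q, rfl : σ q = t⟩ := htail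
  classical
  simp [readVal_cons_cons, hinj.eq_iff, ite_and]

/-- The transfer matrix of the letter `a`. The states `q` are labelled by the unread remainders
`σ q` of the current word; a word is weighted when its first letter is read. -/
def transferMatrix (word : ι → List α) (wt : ι → R) (σ : n → List α) (a : α) : Matrix n n R :=
  .of fun q q' => (if σ q = a :: σ q' then 1 else 0) +
    if σ q = [] then ∑ i, if word i = a :: σ q' then wt i else 0 else 0

variable [DecidableEq n]

lemma prod_transferMatrix_apply (hσ : IsRemainderSystem word σ) {N : ℕ} (hN : W.length < N)
    (q q' : n) :
    (W.map (transferMatrix word wt σ)).prod q q' = readVal word wt N (σ q) W (σ q') := by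
  induction W generalizing N q with
  | nil => simp [readVal_nil_right hN, Matrix.one_apply, hσ.injective.eq_iff]
  | cons a W ih =>
    obtain ⟨N, rfl⟩ := Nat.exists_eq_add_one.mpr (Nat.zero_lt_of_lt hN)
    rw [List.length_cons, Nat.add_lt_add_iff_right] at hN
    rw [List.map_cons, List.prod_cons, Matrix.mul_apply]
    by_cases hq : σ q = []
    · simp only [transferMatrix, Matrix.of_apply, hq, List.nil_eq, reduceCtorEq, if_false,
        if_true, zero_add, ih hN, readVal_nil_left N (List.cons_ne_nil a W)]
      simp only [readVal_cons_eq_sum hσ.injective N a (hσ.word_ne_nil _)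
        (hσ.exists_eq_tail_word _), Finset.sum_mul, Finset.mul_sum]
      rw [Finset.sum_comm]
      simp
    · rw [readVal_cons_eq_sum hσ.injective _ a hq (hσ.exists_eq_tail q)]
      simp [transferMatrix, hq, ih (Nat.lt_succ_of_lt hN)]

theorem trace_prod_transferMatrix (hσ : IsRemainderSystem word σ) (hW : W ≠ []) :
    (W.map (transferMatrix word wt σ)).prod.trace =
      ∑ r ∈ Finset.range W.length, ∑ L ∈ listsLT ι (W.length + 1) with
        ReadsCyclically word W r L, (L.map wt).prod := by
  calc (W.map (transferMatrix word wt σ)).prod.trace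
    _ = ∑ q, ∑ L ∈ listsLT ι (W.length + 1) with Reads word (σ q) W (σ q) L, (L.map wt).prod :=
      Finset.sum_congr rfl fun q _ => prod_transferMatrix_apply hσ W.length.lt_succ_self q q
    _ = ∑ L ∈ listsLT ι (W.length + 1), ∑ q with Reads word (σ q) W (σ q) L, (L.map wt).prod :=
      Finset.sum_comm' (by simp [and_comm])
    _ = ∑ L ∈ listsLT ι (W.length + 1), ∑ r ∈ Finset.range W.length with
          ReadsCyclically word W r L, (L.map wt).prod :=
      Finset.sum_congr rfl fun L _ => hσ.sum_reads_eq_sum_readsCyclically hW L _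
    _ = _ := Finset.sum_comm' (by simp only [Finset.mem_filter]; tauto)

end TransferMatrix

section Trace

variable {α m n R : Type*} [Fintype m] [DecidableEq m]

lemma trace_prod_map_mul_comm [Fintype n] [DecidableEq n] [CommSemiring R]
    (C : α → Matrix n m R) (B : Matrix m n R) {W : List α} (hW : W ≠ []) :
    (W.map fun a => C a * B).prod.trace = (W.map fun a => B * C a).prod.trace := by
  have hcomm (V : List α) :
      B * (V.map fun a => C a * B).prod = (V.map fun a => B * C a).prod * B := by
    induction V with
    | nil => simp
    | cons a V ih => simp only [List.map_cons, List.prod_cons, Matrix.mul_assoc, ← ih]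
  obtain ⟨a, V, rfl⟩ := List.exists_cons_of_ne_nil hW
  rw [List.map_cons, List.prod_cons, Matrix.mul_assoc, hcomm, ← Matrix.mul_assoc,
    Matrix.trace_mul_comm, ← Matrix.mul_assoc, List.map_cons, List.prod_cons]

lemma prod_map_mul_eq_mul_transpose [CommSemiring R] {ρ : α → Matrix m m R} {K : Matrix m m R}
    (h : ∀ a, ρ a * K = K * (ρ a).transpose) (W : List α) :
    (W.map ρ).prod * K = K * (W.reverse.map ρ).prod.transpose := by
  induction W with
  | nil => simp
  | cons a W ih =>
    rw [List.map_cons, List.prod_cons, Matrix.mul_assoc, ih, ← Matrix.mul_assoc, h,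
      List.reverse_cons, List.map_append, List.prod_append, Matrix.transpose_mul, Matrix.mul_assoc,
      List.map_singleton, List.prod_singleton]

lemma trace_prod_map_reverse [CommRing R] {ρ : α → Matrix m m R} {K : Matrix m m R}
    (hK : IsLeftRegular K.det) (h : ∀ a, ρ a * K = K * (ρ a).transpose) (W : List α) :
    (W.reverse.map ρ).prod.trace = (W.map ρ).prod.trace := by
  refine hK ?_
  calc K.det * (W.reverse.map ρ).prod.trace
    _ = (K.adjugate * (K * (W.reverse.map ρ).prod.transpose)).trace := by
      simp [← Matrix.mul_assoc, Matrix.adjugate_mul]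
    _ = ((W.map ρ).prod * K * K.adjugate).trace := by
      rw [← prod_map_mul_eq_mul_transpose h, Matrix.trace_mul_comm]
    _ = K.det * (W.map ρ).prod.trace := by simp [Matrix.mul_assoc, Matrix.mul_adjugate]

end Trace

section Puzzle

open Polynomial

/-- The contribution `coefficient · t ^ weight` of the `i`-th word of the original puzzle. -/
noncomputable def wordVal (i : Fin 9) : ℤ[X] := C (origCoeff (wordOf i)) * X ^ wordWt (wordOf i)

/-- The proper suffixes of the words of the puzzle. -/
def remainder : Fin 5 → PWord := ![[], [.A], [.A, .A], [.B, .A], [.X, .A]]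

/-- A basis of a space containing all rows of the transfer matrices. -/
noncomputable def rowBasis : Matrix (Fin 3) (Fin 5) ℤ[X] :=
  !![1, 0, 0, 0, 0; 0, 1, 0, 0, 0; 0, 0, 1, 1, -2]

/-- Coordinates of the rows of the transfer matrices with respect to `rowBasis`. -/
noncomputable def rowCoords : PLetter → Matrix (Fin 5) (Fin 3) ℤ[X]
  | .X => !![1, X, X; 0, 0, 0; 0, 0, 0; 0, 0, 0; 0, 1, 0]
  | .A => !![0, 0, -X; 1, 0, 0; 0, 1, 0; 0, 0, 0; 0, 0, 0]
  | .B => !![0, -X, 0; 0, 0, 0; 0, 0, 0; 0, 1, 0; 0, 0, 0]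

/-- The action of the transfer matrices on the rows spanned by `rowBasis`. -/
noncomputable def reducedTransfer : PLetter → Matrix (Fin 3) (Fin 3) ℤ[X]
  | .X => !![1, X, X; 0, 0, 0; 0, -2, 0]
  | .A => !![0, 0, -X; 1, 0, 0; 0, 1, 0]
  | .B => !![0, -X, 0; 0, 0, 0; 0, 1, 0]

/-- A symmetric form for which all matrices `reducedTransfer a` are self-adjoint, found by solving
these linear equations. -/
noncomputable def reversalForm : Matrix (Fin 3) (Fin 3) ℤ[X] :=
  !![X, X, 0; X, 0, -1; 0, -1, -1]

lemma isRemainderSystem_remainder : IsRemainderSystem wordOf remainder where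
  word_ne_nil := by decide
  injective := by decide
  exists_eq_tail_word := by decide
  exists_eq_tail := by decide

lemma wordVal_eq : wordVal = ![1, X, X, X, 2 * X, -X, -X, -X, -2 * X] := by
  funext i
  fin_cases i <;> simp [wordVal, origCoeff, wordWt, wordOf]

lemma transferMatrix_eq_rowCoords_mul_rowBasis (a : PLetter) :
    transferMatrix wordOf wordVal remainder a = rowCoords a * rowBasis := by
  rw [wordVal_eq]
  ext1 q q'
  cases a <;> fin_cases q <;> fin_cases q' <;>
    simp [transferMatrix, remainder, wordOf, rowCoords, rowBasis, Matrix.mul_apply,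
      Fin.sum_univ_succ, mul_comm]

lemma rowBasis_mul_rowCoords (a : PLetter) : rowBasis * rowCoords a = reducedTransfer a := by
  cases a <;> simp [rowBasis, rowCoords, reducedTransfer]

lemma reducedTransfer_mul_reversalForm (a : PLetter) :
    reducedTransfer a * reversalForm = reversalForm * (reducedTransfer a).transpose := by
  ext1 i j
  cases a <;> fin_cases i <;> fin_cases j <;>
    simp [reducedTransfer, reversalForm, Matrix.mul_apply, Fin.sum_univ_succ, mul_comm, ← mul_two]

lemma det_reversalForm : reversalForm.det = X * (X - 1) := by
  simp [reversalForm, Matrix.det_fin_three, mul_sub, neg_add_eq_sub]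

lemma parseVal_map_wordOf (L : List (Fin 9)) :
    parseVal origCoeff (L.map wordOf) = (L.map wordVal).prod := by
  induction L with
  | nil => simp [parseVal]
  | cons i L ih =>
    rw [List.map_cons (f := wordVal), List.prod_cons, ← ih]
    simp only [parseVal, wordVal, List.map_cons, List.prod_cons, List.sum_cons, map_mul, pow_add]
    ring

lemma wordOf_mem_origWords : ∀ i, wordOf i ∈ origWords := by
  decide

lemma isOrigCyclicParsing_map_wordOf_iff {W : PWord} {r : ℕ} {L : List (Fin 9)} :
    IsOrigCyclicParsing W r (L.map wordOf) ↔ ReadsCyclically wordOf W r L := by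
  have hmem : ∀ w ∈ L.map wordOf, w ∈ origWords :=
    List.forall_mem_map.mpr fun i _ => wordOf_mem_origWords i
  rw [IsOrigCyclicParsing, and_iff_right hmem]
  rcases L.eq_nil_or_concat' with rfl | ⟨L, i, rfl⟩ <;> simp [ReadsCyclically, List.flatMap_def]

lemma origCycVal_eq_sum_listsLT (W : PWord) :
    origCycVal W = ∑ r ∈ Finset.range W.length, ∑ L ∈ listsLT (Fin 9) (W.length + 1) with
      ReadsCyclically wordOf W r L, (L.map wordVal).prod := by
  simp only [origCycVal, isOrigCyclicParsing_map_wordOf_iff, parseVal_map_wordOf,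
    Finset.sum_filter, sum_listsLT]

lemma origCycVal_eq_trace {W : PWord} (hW : W ≠ []) :
    origCycVal W = (W.map reducedTransfer).prod.trace := by
  rw [origCycVal_eq_sum_listsLT, ← trace_prod_transferMatrix isRemainderSystem_remainder hW,
    funext transferMatrix_eq_rowCoords_mul_rowBasis, trace_prod_map_mul_comm _ _ hW,
    funext rowBasis_mul_rowCoords]

end Puzzle

/-- **Cyclic theorem.**  For every cyclic sentence `S` over `{A, X, B}` one has
`|S| = |S̄|`, where `S̄` is the reversed cyclic sentence (original puzzle). -/
theorem cyclic_reversal (W : PWord) : origCycVal W = origCycVal W.reverse := by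
  rcases eq_or_ne W [] with rfl | hW
  · rfl
  have hregular : IsLeftRegular reversalForm.det := by
    rw [det_reversalForm]
    exact (IsRegular.of_ne_zero (mul_ne_zero Polynomial.X_ne_zero
      (Polynomial.X_sub_C_ne_zero 1))).left
  rw [origCycVal_eq_trace hW, origCycVal_eq_trace (List.reverse_ne_nil_iff.mpr hW),
    trace_prod_map_reverse hregular reducedTransfer_mul_reversalForm]
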